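/- Assume (A1)–(A5). Given any solution (X, U) of the relaxed controlled martingale problem for (𝒜, ν), there exist a measurable relaxed Markov control v̄ : E × [0, ∞) → P(𝕌) and a process X′ which, together with the control U′_t := v̄(X′_t, t), solves the relaxed controlled martingale problem for (𝒜, ν), such that X′_0 has the same law as X_0 and, for every t ≥ 0, the law of X′_t equals the law of X_t (identical one-dimensional marginals). Moreover X′ can be taken to be a Markov process. -/

import Mathlib

open MeasureTheory Set

section Defs

/-- Bounded measurable real-valued functions (`B_b`). -/
def BddMeas {α : Type*} [MeasurableSpace α] (f : α → ℝ) : Prop :=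
  Measurable f ∧ ∃ C, ∀ x, |f x| ≤ C

/-- Progressive measurability of a process w.r.t. a family of σ-algebras. -/
def ProgMeas {Ω β : Type*} [MeasurableSpace β] (ℱ : ℝ → MeasurableSpace Ω)
    (Z : ℝ → Ω → β) : Prop :=
  ∀ t : ℝ, 0 ≤ t →
    Measurable[((inferInstance : MeasurableSpace (Icc (0:ℝ) t)).prod (ℱ t))]
      (fun p : Icc (0:ℝ) t × Ω => Z p.1 p.2)

/-- A real-valued process is a martingale w.r.t. the filtration `ℱ` and measure `P`. -/
def IsMart {Ω : Type*} {m0 : MeasurableSpace Ω} (P : Measure Ω)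
    (ℱ : ℝ → MeasurableSpace Ω) (M : ℝ → Ω → ℝ) : Prop :=
  (∀ t, 0 ≤ t → Integrable (M t) P) ∧
  (∀ t, 0 ≤ t → Measurable[ℱ t] (M t)) ∧
  ∀ s t : ℝ, 0 ≤ s → s ≤ t → P[M t|ℱ s] =ᵐ[P] M s

variable {E 𝕌 : Type*} [MeasurableSpace E] [MeasurableSpace 𝕌]

/-- `𝒜̄ f (x, m) = ∫_𝕌 𝒜 f (x, u) m(du)`. -/
noncomputable def Abar (A : (E → ℝ) → E × 𝕌 → ℝ) (f : E → ℝ) (x : E) (m : Measure 𝕌) : ℝ :=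
  ∫ u, A f (x, u) ∂m

/-- `(X, U)` solves the relaxed controlled martingale problem for `(𝒜, ν)` (domain `D`)
on the filtered probability space `(Ω, ℱ, P)`:  both processes are progressively
measurable, each `U t ω ∈ P(𝕌)`, `law (X 0) = ν`, and for every `f ∈ D`,
`f(X t) - f(X 0) - ∫_0^t ∫_𝕌 𝒜 f (X s, u) U s (du) ds` is a martingale. -/
structure IsRelaxedSol (D : Set (E → ℝ)) (A : (E → ℝ) → E × 𝕌 → ℝ) (ν : Measure E)
    {Ω : Type*} {m0 : MeasurableSpace Ω} (P : Measure Ω)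
    (ℱ : ℝ → MeasurableSpace Ω) (X : ℝ → Ω → E) (U : ℝ → Ω → Measure 𝕌) : Prop where
  prob : IsProbabilityMeasure P
  le : ∀ t, ℱ t ≤ m0
  mono : Monotone ℱ
  progX : ProgMeas ℱ X
  progU : ProgMeas ℱ U
  probU : ∀ t ω, IsProbabilityMeasure (U t ω)
  init : P.map (X 0) = ν
  mart : ∀ f ∈ D, IsMart P ℱ
    (fun t ω => f (X t ω) - f (X 0 ω) - ∫ s in Ioc (0:ℝ) t, Abar A f (X s ω) (U s ω))

/-- `X` solves the (uncontrolled, possibly time-inhomogeneous) martingale problem for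
the generator `L` (with `L f s x` the generator applied at time `s` and state `x`),
domain `D` and initial law `ν`. -/
structure IsMPSol (D : Set (E → ℝ)) (L : (E → ℝ) → ℝ → E → ℝ) (ν : Measure E)
    {Ω : Type*} {m0 : MeasurableSpace Ω} (P : Measure Ω)
    (ℱ : ℝ → MeasurableSpace Ω) (X : ℝ → Ω → E) : Prop where
  prob : IsProbabilityMeasure P
  le : ∀ t, ℱ t ≤ m0
  mono : Monotone ℱ
  progX : ProgMeas ℱ X
  init : P.map (X 0) = ν
  mart : ∀ f ∈ D, IsMart P ℱ
    (fun t ω => f (X t ω) - f (X 0 ω) - ∫ s in Ioc (0:ℝ) t, L f s (X s ω))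

/-- A path is r.c.l.l. on `[0, ∞)`: right-continuous with left limits. -/
def RCLLPath {β : Type*} [TopologicalSpace β] (x : ℝ → β) : Prop :=
  (∀ t : ℝ, 0 ≤ t → ContinuousWithinAt x (Ici t) t) ∧
  (∀ t : ℝ, 0 < t → ∃ l, Filter.Tendsto x (nhdsWithin t (Iio t)) (nhds l))

/-- The process `X` is a Markov process w.r.t. `(P, ℱ)`: for `0 ≤ s ≤ t` and bounded
measurable `g`, `E[g(X t) | ℱ s] = E[g(X t) | σ(X s)]` a.s. -/
def IsMarkovProc {Ω : Type*} {m0 : MeasurableSpace Ω} (P : Measure Ω)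
    (ℱ : ℝ → MeasurableSpace Ω) (X : ℝ → Ω → E) : Prop :=
  ∀ s t : ℝ, 0 ≤ s → s ≤ t → ∀ g : E → ℝ, BddMeas g →
    P[fun ω => g (X t ω)|ℱ s]
      =ᵐ[P] P[fun ω => g (X t ω)|MeasurableSpace.comap (X s) inferInstance]

/-- A set of real-valued functions closed under bounded pointwise convergence. -/
def BPClosed {α : Type*} (S : Set (α → ℝ)) : Prop :=
  ∀ (F : ℕ → α → ℝ) (g : α → ℝ), (∀ n, F n ∈ S) → (∃ C, ∀ n x, |F n x| ≤ C) →
    (∀ x, Filter.Tendsto (fun n => F n x) Filter.atTop (nhds (g x))) → g ∈ S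

/-- The bounded pointwise (bp) closure of a set of real-valued functions. -/
def bpClosure {α : Type*} (S : Set (α → ℝ)) : Set (α → ℝ) :=
  ⋂₀ {T | S ⊆ T ∧ BPClosed T}

/-- A pair `(g, h)` with `g : E → ℝ`, `h : E × 𝕌 → ℝ` encoded as one function on the sum
type, so that bp-convergence of pairs is bp-convergence of these functions. -/
def pairFun (g : E → ℝ) (h : E × 𝕌 → ℝ) : E ⊕ (E × 𝕌) → ℝ := Sum.elim g h

end Defs

lemma aux_hump {E : Type*} [MeasurableSpace E] [MeasurableSingletonClass E]
    (y : ℕ → E) (m : ℕ → Measure E) (hm : ∀ n, IsProbabilityMeasure (m n))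
    (h : ∀ B : Set E, MeasurableSet B → ∀ ε : ℝ, 0 < ε →
      ∀ᶠ n in Filter.atTop, y n ∈ B → (m n).real Bᶜ ≤ ε)
    (ε : ℝ) (hε : 0 < ε) (hbad : ∀ n, ε < (m n).real {y n}ᶜ) : False := by
  have hne : ∀ z : E, ∀ᶠ n in Filter.atTop, y n ≠ z := by
    intro z
    filter_upwards [h {z} (measurableSet_singleton z) ε hε] with n hn hz
    have h1 := hn hz
    have h2 := hbad n
    rw [hz] at h2
    linarith
  -- tails
  have hT : ∀ n, ∃ T, (m n).real (y '' Ici T) ≤ ε / 4 := by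
    intro n
    have hmeas : ∀ T, MeasurableSet (y '' Ici T) := fun T =>
      ((Set.to_countable (Ici T)).image y).measurableSet
    have hanti : Antitone fun T => y '' Ici T := fun a b hab =>
      image_mono (Ici_subset_Ici.2 hab)
    have hemp : (⋂ T, y '' Ici T) = ∅ := by
      ext z
      simp only [mem_iInter, mem_empty_iff_false, iff_false]
      intro hz
      obtain ⟨N, hN⟩ := Filter.eventually_atTop.1 (hne z)
      obtain ⟨k, hk, rfl⟩ := hz N
      exact hN k hk rfl
    have := tendsto_measure_iInter_atTop (μ := m n) (s := fun T => y '' Ici T)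
      (fun T => (hmeas T).nullMeasurableSet) hanti ⟨0, measure_ne_top _ _⟩
    rw [hemp, measure_empty] at this
    have h2 := (ENNReal.tendsto_toReal ENNReal.zero_ne_top).comp this
    have h3 := h2.eventually_le_const (u := ε / 4) (by rw [ENNReal.toReal_zero]; positivity)
    obtain ⟨T, hT⟩ := h3.exists
    exact ⟨T, hT⟩
  have hF : ∀ N, ∃ N', N < N' ∧ ∀ n, N' ≤ n → (m n).real (y '' Iic N) ≤ ε / 4 := by
    intro N
    have hfin : (y '' Iic N).Finite := (Set.finite_Iic N).image y
    have e1 : ∀ᶠ n in Filter.atTop, ∀ z ∈ y '' Iic N, y n ≠ z :=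
      (Filter.eventually_all_finite hfin).2 fun z _ => hne z
    have e2 := h (y '' Iic N)ᶜ hfin.measurableSet.compl (ε / 4) (by positivity)
    obtain ⟨N', hN'⟩ := Filter.eventually_atTop.1 ((e1.and e2).and (Filter.eventually_gt_atTop N))
    refine ⟨N', (hN' N' le_rfl).2, fun n hn => ?_⟩
    have h1 := (hN' n hn).1
    have := h1.2 (fun hmem => h1.1 _ hmem rfl)
    rwa [compl_compl] at this
  choose T hT using hT
  choose N' hN1 hN2 using hF
  let φ : ℕ → ℕ := fun n => max (N' n) (T n)
  let a : ℕ → ℕ := fun k => φ^[k] 0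
  have ha : ∀ k, a (k + 1) = φ (a k) := fun k => Function.iterate_succ_apply' φ k 0
  have hmono : StrictMono a := strictMono_nat_of_lt_succ fun k => by
    rw [ha]; exact (hN1 _).trans_le (le_max_left _ _)
  have hBm : MeasurableSet (range fun k => y (a k)) := (countable_range _).measurableSet
  obtain ⟨K, hK⟩ := Filter.eventually_atTop.1 (h _ hBm (ε / 4) (by positivity))
  have hk : K ≤ a (K + 1) := (Nat.le_succ K).trans (hmono.id_le _)
  have h1 := hK _ hk ⟨K + 1, rfl⟩
  have h2 := hbad (a (K + 1))
  set n := a (K + 1) with hn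
  have hsub : ({y n}ᶜ : Set E) ⊆
      (range fun k => y (a k))ᶜ ∪ (y '' Iic (a K) ∪ y '' Ici (T n)) := by
    intro z hz
    by_cases hzB : z ∈ range fun k => y (a k)
    · obtain ⟨k, rfl⟩ := hzB
      right
      rcases lt_trichotomy k (K + 1) with hlt | heq | hgt
      · left
        exact ⟨a k, hmono.monotone (Nat.lt_succ_iff.1 hlt), rfl⟩
      · exact absurd (by rw [hn, heq]; rfl) hz
      · right
        refine ⟨a k, ?_, rfl⟩
        have : a (K + 2) ≤ a k := hmono.monotone hgt
        rw [ha] at this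
        exact (le_max_right _ _).trans this
    · exact Or.inl hzB
  have h3 := (measureReal_mono (μ := m n) hsub).trans
    ((measureReal_union_le _ _).trans (add_le_add le_rfl (measureReal_union_le _ _)))
  have h4 := hT n
  have h5 := hN2 (a K) n (by rw [hn, ha]; exact le_max_left _ _)
  linarith

lemma aux_gronwall {E : Type*} [MeasurableSpace E] (L : ℝ → (E → ℝ) → E → ℝ) (C K s : ℝ)
    (hL : ∀ a f, BddMeas f → BddMeas (L a f))
    (hLb : ∀ a f M, BddMeas f → (∀ x, |f x| ≤ M) → ∀ x, |L a f x| ≤ C * M)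
    (Λ : ℝ → (E → ℝ) → ℝ)
    (hb : ∀ r f M, s ≤ r → BddMeas f → (∀ x, |f x| ≤ M) → |Λ r f| ≤ K * M)
    (heq : ∀ r f, s ≤ r → BddMeas f → Λ r f = ∫ a in Ioc s r, Λ a (L a f))
    (r : ℝ) (hr : s ≤ r) (f : E → ℝ) (hf : BddMeas f) : Λ r f = 0 := by
  have key : ∀ n : ℕ, ∀ r f M, s ≤ r → BddMeas f → (∀ x, |f x| ≤ M) →
      |Λ r f| ≤ K * M * (C ^ n * (r - s) ^ n / n.factorial) := by
    intro n
    induction n with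
    | zero => intro r f M hr hf hM; simpa using hb r f M hr hf hM
    | succ n ih =>
      intro r f M hr hf hM
      rw [heq r f hr hf]
      have hint : ∫ a in s..r, K * (C * M) * (C ^ n * (a - s) ^ n / n.factorial)
          = K * M * (C ^ (n + 1) * (r - s) ^ (n + 1) / (n + 1).factorial) := by
        rw [intervalIntegral.integral_const_mul, intervalIntegral.integral_div,
          intervalIntegral.integral_const_mul,
          intervalIntegral.integral_comp_sub_right (fun a => a ^ n) s, integral_pow]
        have : ((n.factorial : ℕ) : ℝ) ≠ 0 := by positivity
        have : ((n : ℝ) + 1) ≠ 0 := by positivity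
        rw [Nat.factorial_succ]
        push_cast
        field_simp
        simp
        ring
      rw [← hint, intervalIntegral.integral_of_le hr]
      rw [← Real.norm_eq_abs]
      apply norm_integral_le_of_norm_le
      · have : Continuous fun a : ℝ => K * (C * M) * (C ^ n * (a - s) ^ n / n.factorial) := by
          fun_prop
        exact this.integrableOn_Ioc
      · refine (ae_restrict_iff' measurableSet_Ioc).2 (Filter.Eventually.of_forall fun a ha => ?_)
        exact ih a (L a f) (C * M) ha.1.le (hL a f hf) (hLb a f M hf hM)
  obtain ⟨M, hM⟩ := hf.2
  have hlim : Filter.Tendsto (fun n : ℕ => K * M * (C ^ n * (r - s) ^ n / n.factorial))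
      Filter.atTop (nhds 0) := by
    have := (FloorSemiring.tendsto_pow_div_factorial_atTop (C * (r - s))).const_mul (K * M)
    simpa [mul_pow] using this
  have := ge_of_tendsto' hlim fun n => key n r f M hr hf hM
  exact abs_eq_zero.1 (le_antisymm this (abs_nonneg _))

lemma aux_joint {Ω β : Type*} [MeasurableSpace β] {m0 : MeasurableSpace Ω}
    {ℱ : ℝ → MeasurableSpace Ω} (hle : ∀ t, ℱ t ≤ m0) {G : ℝ → Ω → β} (hG : ProgMeas ℱ G)
    (t : ℝ) (ht : 0 ≤ t) :
    Measurable (fun p : ℝ × Ω => G (projIcc 0 t ht p.1) p.2) := by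
  have h1 : Measurable (fun p : Icc (0:ℝ) t × Ω => G p.1 p.2) :=
    (hG t ht).mono (sup_le_sup le_rfl (MeasurableSpace.comap_mono (hle t))) le_rfl
  have h2 : Measurable (fun p : ℝ × Ω => (projIcc 0 t ht p.1, p.2)) :=
    (continuous_projIcc.measurable.comp measurable_fst).prodMk measurable_snd
  exact h1.comp h2

lemma aux_adapted {Ω β : Type*} [MeasurableSpace β]
    {ℱ : ℝ → MeasurableSpace Ω} {G : ℝ → Ω → β} (hG : ProgMeas ℱ G)
    (t : ℝ) (ht : 0 ≤ t) : Measurable[ℱ t] (G t) := by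
  let _ : MeasurableSpace Ω := ℱ t
  have h1 : Measurable (fun p : Icc (0:ℝ) t × Ω => G p.1 p.2) := hG t ht
  have h2 : Measurable (fun ω : Ω => ((⟨t, ht, le_rfl⟩ : Icc (0:ℝ) t), ω)) :=
    measurable_const.prodMk measurable_id
  exact h1.comp h2

lemma aux_integrable {Ω : Type*} {m0 : MeasurableSpace Ω} (P : Measure Ω) [IsFiniteMeasure P]
    {g : Ω → ℝ} (hg : Measurable g) {K : ℝ} (hK : ∀ ω, |g ω| ≤ K) : Integrable g P :=
  Integrable.of_bound hg.aestronglyMeasurable K (Filter.Eventually.of_forall hK)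

lemma aux_dynkin {E Ω : Type*} [MeasurableSpace E] {m0 : MeasurableSpace Ω} (P : Measure Ω)
    [IsProbabilityMeasure P] (ℱ : ℝ → MeasurableSpace Ω) (hle : ∀ t, ℱ t ≤ m0)
    (X : ℝ → Ω → E) (hX : ProgMeas ℱ X) (G : ℝ → Ω → ℝ) (hG : ProgMeas ℱ G)
    (K : ℝ) (hGb : ∀ s ω, |G s ω| ≤ K) (f : E → ℝ) (hf : BddMeas f)
    (hM : IsMart P ℱ (fun t ω => f (X t ω) - f (X 0 ω) - ∫ s in Ioc (0:ℝ) t, G s ω))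
    (s t : ℝ) (hs : 0 ≤ s) (hst : s ≤ t) (Z : Ω → ℝ) (hZ : Measurable[ℱ s] Z)
    (KZ : ℝ) (hZb : ∀ ω, |Z ω| ≤ KZ) :
    IntegrableOn (fun a => ∫ ω, Z ω * G a ω ∂P) (Ioc s t) ∧
    ∫ ω, Z ω * f (X t ω) ∂P - ∫ ω, Z ω * f (X s ω) ∂P
      = ∫ a in Ioc s t, ∫ ω, Z ω * G a ω ∂P := by
  have ht : 0 ≤ t := hs.trans hst
  obtain ⟨Cf, hCf⟩ := hf.2
  have hZm : Measurable Z := hZ.mono (hle s) le_rfl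
  have hXm : ∀ r, 0 ≤ r → Measurable (X r) := fun r hr =>
    (aux_adapted hX r hr).mono (hle r) le_rfl
  have hJ := aux_joint hle hG t ht
  have hproj : ∀ a ∈ Ioc (0:ℝ) t, ((projIcc 0 t ht a : Icc (0:ℝ) t) : ℝ) = a := fun a ha => by
    rw [projIcc_of_mem ht ⟨ha.1.le, ha.2⟩]
  have hproj' : ∀ a ∈ Ioc s t, ((projIcc 0 t ht a : Icc (0:ℝ) t) : ℝ) = a := fun a ha =>
    hproj a ⟨hs.trans_lt ha.1, ha.2⟩
  -- time integrability
  have hGint : ∀ ω, IntegrableOn (fun a => G a ω) (Ioc 0 t) := by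
    intro ω
    have : IntegrableOn (fun a => G (projIcc 0 t ht a) ω) (Ioc 0 t) := by
      refine aux_integrable _ ?_ (fun a => hGb _ ω)
      exact hJ.comp (measurable_id.prodMk measurable_const)
    exact this.congr_fun (fun a ha => by simp only [hproj a ha]) measurableSet_Ioc
  have hsplit : ∀ ω, (∫ a in Ioc 0 t, G a ω) - ∫ a in Ioc 0 s, G a ω = ∫ a in Ioc s t, G a ω := by
    intro ω
    have h1 := setIntegral_union (μ := volume) (f := fun a => G a ω)
      (Set.Ioc_disjoint_Ioc_of_le (le_refl s) : Disjoint (Ioc 0 s) (Ioc s t)) measurableSet_Ioc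
      ((hGint ω).mono_set (Ioc_subset_Ioc_right hst))
      ((hGint ω).mono_set (Ioc_subset_Ioc_left hs))
    rw [Ioc_union_Ioc_eq_Ioc hs hst] at h1
    linarith
  -- Fubini
  have hH : Integrable (Function.uncurry fun (ω : Ω) (a : ℝ) => Z ω * G (projIcc 0 t ht a) ω)
      (P.prod (volume.restrict (Ioc s t))) := by
    refine aux_integrable _ (K := KZ * K) ?_ ?_
    · exact (hZm.comp measurable_fst).mul (hJ.comp measurable_swap)
    · rintro ⟨ω, a⟩
      simp only [Function.uncurry, abs_mul]
      exact mul_le_mul (hZb ω) (hGb _ _) (abs_nonneg _) ((abs_nonneg _).trans (hZb ω))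
  have hswap := integral_integral_swap hH
  have hinner : ∀ ω, ∫ a in Ioc s t, Z ω * G (projIcc 0 t ht a) ω
      = Z ω * ∫ a in Ioc s t, G a ω := by
    intro ω
    rw [integral_const_mul]
    congr 1
    exact setIntegral_congr_fun measurableSet_Ioc fun a ha => by simp only [hproj' a ha]
  have hi1 : Integrable (fun ω => Z ω * ∫ a in Ioc s t, G a ω) P := by
    have := hH.integral_prod_left
    simpa only [Function.uncurry, hinner] using this
  have hi2 : IntegrableOn (fun a => ∫ ω, Z ω * G a ω ∂P) (Ioc s t) := by
    have h := hH.integral_prod_right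
    refine IntegrableOn.congr_fun (f := fun a => ∫ ω, Z ω * G (projIcc 0 t ht a) ω ∂P) h
      (fun a ha => by simp only [hproj' a ha]) measurableSet_Ioc
  refine ⟨hi2, ?_⟩
  have hR : ∫ a in Ioc s t, ∫ ω, Z ω * G a ω ∂P = ∫ ω, Z ω * (∫ a in Ioc s t, G a ω) ∂P := by
    rw [← integral_congr_ae (Filter.Eventually.of_forall hinner), hswap]
    exact setIntegral_congr_fun measurableSet_Ioc fun a ha => by simp only [hproj' a ha]
  obtain ⟨hM1, hM2, hM3⟩ := hM
  set M : ℝ → Ω → ℝ := fun t ω => f (X t ω) - f (X 0 ω) - ∫ s in Ioc (0:ℝ) t, G s ω with hMdef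
  have hZs : StronglyMeasurable[ℱ s] Z := hZ.stronglyMeasurable
  have hpull := condExp_stronglyMeasurable_mul_of_bound (μ := P) (hle s) hZs (hM1 t ht) KZ
    (Filter.Eventually.of_forall hZb)
  have hZM : ∀ r, 0 ≤ r → Integrable (fun ω => Z ω * M r ω) P := fun r hr =>
    (hM1 r hr).bdd_mul hZm.aestronglyMeasurable (Filter.Eventually.of_forall hZb)
  have hE : ∫ ω, Z ω * M t ω ∂P = ∫ ω, Z ω * M s ω ∂P := by
    have h1 : ∫ ω, (P[Z * M t|ℱ s]) ω ∂P = ∫ ω, (Z * M t) ω ∂P := integral_condExp (hle s)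
    have h2 : ∫ ω, (P[Z * M t|ℱ s]) ω ∂P = ∫ ω, Z ω * M s ω ∂P := by
      apply integral_congr_ae
      filter_upwards [hpull, hM3 s t hs hst] with ω h1 h2
      rw [h1, Pi.mul_apply, h2]
    rw [← h2, h1]; rfl
  have hZf : ∀ r, 0 ≤ r → Integrable (fun ω => Z ω * f (X r ω)) P := fun r hr =>
    (aux_integrable P (hf.1.comp (hXm r hr)) (fun ω => hCf _)).bdd_mul hZm.aestronglyMeasurable
      (Filter.Eventually.of_forall hZb)
  rw [hR, ← integral_sub (hZf t ht) (hZf s hs)]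
  have h0 : ∫ ω, (Z ω * M t ω - Z ω * M s ω) ∂P = 0 := by
    rw [integral_sub (hZM t ht) (hZM s hs), hE, sub_self]
  have h1 : ∫ ω, ((Z ω * M t ω - Z ω * M s ω) + Z ω * (∫ a in Ioc s t, G a ω)) ∂P
      = ∫ ω, Z ω * (∫ a in Ioc s t, G a ω) ∂P := by
    have hsubi : Integrable (fun ω => Z ω * M t ω - Z ω * M s ω) P := (hZM t ht).sub (hZM s hs)
    rw [integral_add hsubi hi1, h0, zero_add]
  rw [← h1]
  congr 1
  ext ω
  rw [← hsplit ω]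
  simp only [hMdef]
  ring

lemma aux_kernel {α E 𝕌 : Type*} [MeasurableSpace α] [MeasurableSpace E] [MeasurableSpace 𝕌]
    {h : E × 𝕌 → ℝ} (hh : Measurable h) {x : α → E} (hx : Measurable x)
    {m : α → Measure 𝕌} (hm : Measurable m) (hp : ∀ a, IsProbabilityMeasure (m a)) :
    Measurable fun a => ∫ u, h (x a, u) ∂(m a) := by
  let κ : ProbabilityTheory.Kernel α 𝕌 := ⟨m, hm⟩
  have : ProbabilityTheory.IsMarkovKernel κ := ⟨hp⟩
  have h1 : Measurable fun q : α × 𝕌 => h (x q.1, q.2) :=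
    hh.comp ((hx.comp measurable_fst).prodMk measurable_snd)
  exact (StronglyMeasurable.integral_kernel_prod_right' (κ := κ) h1.stronglyMeasurable).measurable

lemma aux_intbound {Ω : Type*} {m0 : MeasurableSpace Ω} (P : Measure Ω) [IsProbabilityMeasure P]
    {g : Ω → ℝ} {K : ℝ} (hK : ∀ ω, |g ω| ≤ K) : |∫ ω, g ω ∂P| ≤ K := by
  have := norm_integral_le_of_norm_le_const (μ := P) (f := g) (C := K)
    (Filter.Eventually.of_forall hK)
  simpa using this

lemma aux_laws {E 𝕌 : Type*} [MeasurableSpace E] [MeasurableSpace 𝕌]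
    (D : Set (E → ℝ)) (A : (E → ℝ) → E × 𝕌 → ℝ)
    (hDbm : ∀ f ∈ D, BddMeas f) (hAbm : ∀ f ∈ D, BddMeas (A f)) (u : 𝕌) (x : E)
    {Ω' : Type*} {m' : MeasurableSpace Ω'} (P' : Measure Ω')
    (ℱ' : ℝ → MeasurableSpace Ω') (Y : ℝ → Ω' → E)
    (hY : IsMPSol D (fun f _ y => A f (y, u)) (Measure.dirac x) P' ℱ' Y) :
    ∃ μ : ℝ → Measure E, (∀ t, 0 ≤ t → IsProbabilityMeasure (μ t)) ∧
      ∀ f ∈ D, ∀ t, 0 ≤ t → IntegrableOn (fun s => ∫ y, A f (y, u) ∂(μ s)) (Ioc 0 t) ∧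
        ∫ y, f y ∂(μ t) - f x = ∫ s in Ioc 0 t, ∫ y, A f (y, u) ∂(μ s) := by
  have hprob := hY.prob
  have hm : ∀ t, 0 ≤ t → Measurable (Y t) := fun t ht =>
    (aux_adapted hY.progX t ht).mono (hY.le t) le_rfl
  refine ⟨fun t => P'.map (Y t), fun t ht =>
    Measure.isProbabilityMeasure_map (hm t ht).aemeasurable, fun f hf t ht => ?_⟩
  obtain ⟨K, hK⟩ := (hAbm f hf).2
  have hAm : Measurable fun y => A f (y, u) :=
    (hAbm f hf).1.comp (measurable_id.prodMk measurable_const)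
  have hG : ProgMeas ℱ' (fun s ω => A f (Y s ω, u)) := fun t ht => hAm.comp (hY.progX t ht)
  have hd := aux_dynkin P' ℱ' hY.le Y hY.progX (fun s ω => A f (Y s ω, u)) hG K
    (fun s ω => hK _) f (hDbm f hf) (hY.mart f hf) 0 t le_rfl ht (fun _ => 1) measurable_const 1
    (fun _ => by simp)
  simp only [one_mul] at hd
  have hmap : ∀ s, 0 ≤ s → ∫ y, A f (y, u) ∂(P'.map (Y s)) = ∫ ω, A f (Y s ω, u) ∂P' :=
    fun s hs => integral_map (hm s hs).aemeasurable hAm.aestronglyMeasurable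
  have hmapf : ∀ s, 0 ≤ s → ∫ y, f y ∂(P'.map (Y s)) = ∫ ω, f (Y s ω) ∂P' :=
    fun s hs => integral_map (hm s hs).aemeasurable (hDbm f hf).1.aestronglyMeasurable
  have hcongr : EqOn (fun s => ∫ ω, A f (Y s ω, u) ∂P')
      (fun s => ∫ y, A f (y, u) ∂(P'.map (Y s))) (Ioc 0 t) := fun s hs => (hmap s hs.1.le).symm
  refine ⟨hd.1.congr_fun hcongr measurableSet_Ioc, ?_⟩
  rw [← setIntegral_congr_fun measurableSet_Ioc hcongr, ← hd.2, hmapf t ht, ← hmapf 0 le_rfl,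
    hY.init, integral_dirac' _ _ (hDbm f hf).1.stronglyMeasurable]

lemma aux_small {E 𝕌 : Type*} [MeasurableSpace E] [MeasurableSingletonClass E]
    [MeasurableSpace 𝕌]
    (D : Set (E → ℝ)) (A : (E → ℝ) → E × 𝕌 → ℝ)
    (hDbm : ∀ f ∈ D, BddMeas f) (hAbm : ∀ f ∈ D, BddMeas (A f))
    (hdens : ∀ g : E → ℝ, BddMeas g → ∀ ε : ℝ, 0 < ε → ∃ f ∈ D, ∀ x, |f x - g x| ≤ ε)
    (μ : E × 𝕌 → ℝ → Measure E) (hprob : ∀ p t, 0 ≤ t → IsProbabilityMeasure (μ p t))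
    (hdyn : ∀ f ∈ D, ∀ p t, 0 ≤ t → ∫ y, f y ∂(μ p t) - f p.1
      = ∫ s in Ioc 0 t, ∫ y, A f (y, p.2) ∂(μ p s)) :
    ∃ δ : ℝ, 0 < δ ∧ ∀ p t, 0 < t → t ≤ δ → (μ p t).real {p.1}ᶜ ≤ 1 / 4 := by
  by_contra hcon
  push Not at hcon
  have hsel : ∀ n : ℕ, ∃ p t, 0 < t ∧ t ≤ 1 / ((n : ℝ) + 1) ∧ 1 / 4 < (μ p t).real {p.1}ᶜ :=
    fun n => hcon _ (by positivity)
  choose p t ht0 htn hbad using hsel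
  have hpr : ∀ n, IsProbabilityMeasure (μ (p n) (t n)) := fun n => hprob _ _ (ht0 n).le
  refine aux_hump (fun n => (p n).1) (fun n => μ (p n) (t n)) hpr ?_ (1 / 4) (by norm_num) hbad
  intro B hB ε hε
  have hind : BddMeas (B.indicator fun _ => (1 : ℝ)) := by
    refine ⟨measurable_const.indicator hB, 1, fun x => ?_⟩
    by_cases hx : x ∈ B <;> simp [hx]
  obtain ⟨f, hf, hfB⟩ := hdens _ hind (ε / 4) (by positivity)
  obtain ⟨K, hK⟩ := (hAbm f hf).2
  have hlim : Filter.Tendsto (fun n : ℕ => K * (1 / ((n : ℝ) + 1))) Filter.atTop (nhds 0) := by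
    simpa using tendsto_one_div_add_atTop_nhds_zero_nat.const_mul K
  filter_upwards [hlim.eventually_le_const (u := ε / 4) (by positivity)] with n hn hx
  have := hpr n
  set m := μ (p n) (t n) with hm
  have hd := hdyn f hf (p n) (t n) (ht0 n).le
  have hK0 : 0 ≤ K := (abs_nonneg _).trans (hK (p n))
  have hb : |∫ s in Ioc 0 (t n), ∫ y, A f (y, (p n).2) ∂(μ (p n) s)| ≤ K * t n := by
    have := norm_setIntegral_le_of_norm_le_const (μ := volume) (s := Ioc 0 (t n)) (C := K)
      (f := fun s => ∫ y, A f (y, (p n).2) ∂(μ (p n) s)) (by simp) (fun s hs => by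
        have := hprob (p n) s hs.1.le
        exact aux_intbound _ fun y => hK _)
    simpa [Measure.real, (ht0 n).le] using this
  rw [← hd] at hb
  have h1 := (abs_le.1 hb).1
  have h2 : K * t n ≤ ε / 4 := (mul_le_mul_of_nonneg_left (htn n) hK0).trans hn
  have h3 := (abs_le.1 (hfB (p n).1)).1
  rw [indicator_of_mem hx] at h3
  have h4 : ∫ y, f y ∂m ≤ m.real B + ε / 4 := by
    obtain ⟨Cf, hCf⟩ := (hDbm f hf).2
    have h5 : ∫ y, f y ∂m ≤ ∫ y, (B.indicator (fun _ => (1 : ℝ)) y + ε / 4) ∂m := by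
      apply integral_mono (aux_integrable _ (hDbm f hf).1 hCf)
      · exact ((integrable_const _).indicator hB).add (integrable_const _)
      · intro y
        have := (abs_le.1 (hfB y)).2
        simp only
        linarith
    rw [integral_add ((integrable_const _).indicator hB) (integrable_const _),
      integral_indicator_const _ hB] at h5
    simpa using h5
  have h6 := probReal_compl_eq_one_sub (μ := m) hB
  rw [h6]
  linarith

lemma aux_bound {E 𝕌 : Type*} [MeasurableSpace E] [MeasurableSingletonClass E]
    [MeasurableSpace 𝕌]
    (D : Set (E → ℝ)) (A : (E → ℝ) → E × 𝕌 → ℝ)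
    (hDbm : ∀ f ∈ D, BddMeas f) (hAbm : ∀ f ∈ D, BddMeas (A f))
    (hdens : ∀ g : E → ℝ, BddMeas g → ∀ ε : ℝ, 0 < ε → ∃ f ∈ D, ∀ x, |f x - g x| ≤ ε)
    (μ : E × 𝕌 → ℝ → Measure E) (hprob : ∀ p t, 0 ≤ t → IsProbabilityMeasure (μ p t))
    (hdyn : ∀ f ∈ D, ∀ p t, 0 ≤ t →
      IntegrableOn (fun s => ∫ y, A f (y, p.2) ∂(μ p s)) (Ioc 0 t) ∧ 
      ∫ y, f y ∂(μ p t) - f p.1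
      = ∫ s in Ioc 0 t, ∫ y, A f (y, p.2) ∂(μ p s)) :
    ∃ C : ℝ, 0 ≤ C ∧ ∀ f ∈ D, ∀ M, (∀ x, |f x| ≤ M) → ∀ p, |A f p| ≤ C * M := by
  obtain ⟨δ, hδ, hsm⟩ := aux_small D A hDbm hAbm hdens μ hprob
    (fun f hf p t ht => (hdyn f hf p t ht).2)
  refine ⟨4 / δ, by positivity, fun f hf M hM => ?_⟩
  have step : ∀ S, (∀ p, |A f p| ≤ S) → ∀ p, |A f p| ≤ 2 * M / δ + S / 2 := by
    rintro S hS ⟨x, u⟩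
    obtain ⟨hi, hd⟩ := hdyn f hf (x, u) δ hδ.le
    simp only at hi hd
    have hS0 : 0 ≤ S := (abs_nonneg _).trans (hS (x, u))
    have hAm : Measurable fun y => A f (y, u) :=
      (hAbm f hf).1.comp (measurable_id.prodMk measurable_const)
    have h1 : ∀ s ∈ Ioc 0 δ, ‖(∫ y, A f (y, u) ∂(μ (x, u) s)) - A f (x, u)‖ ≤ S / 2 := by
      intro s hs
      have hp := hprob (x, u) s hs.1.le
      have e1 : (∫ y, A f (y, u) ∂(μ (x, u) s)) - A f (x, u)
          = ∫ y, (A f (y, u) - A f (x, u)) ∂(μ (x, u) s) := by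
        rw [integral_sub (aux_integrable _ hAm fun y => hS _) (integrable_const _)]
        simp
      have hcm : MeasurableSet ({x}ᶜ : Set E) := (measurableSet_singleton x).compl
      have e2 : ‖∫ y, (A f (y, u) - A f (x, u)) ∂(μ (x, u) s)‖
          ≤ ∫ y, ({x}ᶜ : Set E).indicator (fun _ => 2 * S) y ∂(μ (x, u) s) := by
        refine norm_integral_le_of_norm_le ((integrable_const _).indicator hcm)
          (Filter.Eventually.of_forall fun y => ?_)
        by_cases hy : y = x
        · simp [hy]
        · rw [indicator_of_mem (by simpa using hy)]
          calc _ ≤ |A f (y, u)| + |A f (x, u)| := abs_sub _ _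
            _ ≤ 2 * S := by linarith [hS (y, u), hS (x, u)]
      rw [integral_indicator_const _ hcm, smul_eq_mul] at e2
      rw [e1]
      have h3 := mul_le_mul_of_nonneg_right (hsm (x, u) s hs.1 hs.2) (by positivity : 0 ≤ 2 * S)
      simp only at h3
      linarith
    have h2 := norm_setIntegral_le_of_norm_le_const (μ := volume) (by simp) h1
    rw [integral_sub hi (by simp), ← hd, setIntegral_const] at h2
    have hp := hprob (x, u) δ hδ.le
    have h3 := aux_intbound (μ (x, u) δ) hM
    have hv : volume.real (Ioc 0 δ) = δ := by simp [Measure.real, hδ.le]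
    rw [hv, smul_eq_mul, Real.norm_eq_abs] at h2
    have h4 := abs_le.1 h2
    have h5 := abs_le.1 h3
    have h6 := abs_le.1 (hM x)
    have h7 : δ * (2 * M / δ + S / 2) = 2 * M + S / 2 * δ := by field_simp
    refine le_of_mul_le_mul_left ?_ hδ
    rw [h7, ← abs_of_pos hδ, ← abs_mul, abs_of_pos hδ]
    exact abs_le.2 ⟨by linarith, by linarith⟩
  obtain ⟨S0, hS0⟩ := (hAbm f hf).2
  intro p
  have hbdd : BddAbove (range fun p => |A f p|) := ⟨S0, by rintro _ ⟨q, rfl⟩; exact hS0 q⟩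
  have : Nonempty (E × 𝕌) := ⟨p⟩
  have h1 := ciSup_le (step (⨆ p, |A f p|) (fun p => le_ciSup hbdd p))
  have h2 := le_ciSup hbdd p
  have h3 : 4 / δ * M = 2 * (2 * M / δ) := by ring
  rw [h3]
  linarith

lemma aux_full {E 𝕌 : Type*} [MeasurableSpace E] [MeasurableSpace 𝕌] [Nonempty E]
    (D : Set (E → ℝ)) (A : (E → ℝ) → E × 𝕌 → ℝ)
    (hDbm : ∀ f ∈ D, BddMeas f) (hAbm : ∀ f ∈ D, BddMeas (A f))
    (hadd : ∀ f ∈ D, ∀ g ∈ D, f + g ∈ D ∧ A (f + g) = A f + A g)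
    (hsmul : ∀ (c : ℝ), ∀ f ∈ D, c • f ∈ D ∧ A (c • f) = c • A f)
    (hdens : ∀ g : E → ℝ, BddMeas g → ∀ ε : ℝ, 0 < ε → ∃ f ∈ D, ∀ x, |f x - g x| ≤ ε)
    (u : 𝕌)
    (hdiss : ∀ f ∈ D, (⨆ x, |f x|) ≤ ⨆ x, |f x - A f (x, u)|)
    (hran : ∀ (g : E → ℝ), BddMeas g → ∃ f ∈ D, ∀ x, f x - A f (x, u) = g x)
    (C : ℝ)
    (hbd : ∀ f ∈ D, ∀ M, (∀ x, |f x| ≤ M) → ∀ p, |A f p| ≤ C * M)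
    (g : E → ℝ) (hg : BddMeas g) : g ∈ D := by
  have hsub : ∀ f ∈ D, ∀ h ∈ D, f + (-1 : ℝ) • h ∈ D ∧
      ∀ p, A (f + (-1 : ℝ) • h) p = A f p - A h p := by
    intro f hf h hh
    have h1 := hsmul (-1) h hh
    have h2 := hadd f hf _ h1.1
    refine ⟨h2.1, fun p => ?_⟩
    rw [h2.2, h1.2]
    simp [sub_eq_add_neg]
  have hsel : ∀ n : ℕ, ∃ f ∈ D, ∀ x, |f x - g x| ≤ 1 / ((n : ℝ) + 1) := fun n =>
    hdens g hg _ (by positivity)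
  choose F hFD hFg using hsel
  have hlim0 : Filter.Tendsto (fun n : ℕ => 1 / ((n : ℝ) + 1)) Filter.atTop (nhds 0) :=
    tendsto_one_div_add_atTop_nhds_zero_nat
  have hanti : ∀ N n : ℕ, N ≤ n → 1 / ((n : ℝ) + 1) ≤ 1 / ((N : ℝ) + 1) := fun N n h =>
    Nat.one_div_le_one_div h
  have hdiff : ∀ N n m, N ≤ n → N ≤ m → ∀ p,
      |A (F n) p - A (F m) p| ≤ C * (2 * (1 / ((N : ℝ) + 1))) := by
    intro N n m hn hm p
    have h1 := hsub _ (hFD n) _ (hFD m)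
    rw [← h1.2]
    refine hbd _ h1.1 _ (fun x => ?_) p
    have h2 := abs_le.1 ((hFg n x).trans (hanti N n hn))
    have h3 := abs_le.1 ((hFg m x).trans (hanti N m hm))
    simp only [Pi.add_apply, Pi.smul_apply, smul_eq_mul]
    exact abs_le.2 ⟨by linarith, by linarith⟩
  have hlimC : Filter.Tendsto (fun N : ℕ => C * (2 * (1 / ((N : ℝ) + 1)))) Filter.atTop
      (nhds 0) := by simpa using (hlim0.const_mul 2).const_mul C
  have hcau : ∀ x, ∃ l, Filter.Tendsto (fun n => A (F n) (x, u)) Filter.atTop (nhds l) := by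
    intro x
    apply cauchySeq_tendsto_of_complete
    exact cauchySeq_of_le_tendsto_0 _ (fun n m N hn hm => hdiff N n m hn hm _) hlimC
  choose h hh using hcau
  have hAh : ∀ n x, |A (F n) (x, u) - h x| ≤ C * (2 * (1 / ((n : ℝ) + 1))) := by
    intro n x
    have := (((hh x).const_sub (A (F n) (x, u))).abs)
    refine le_of_tendsto this ?_
    filter_upwards [Filter.eventually_ge_atTop n] with m hm
    exact hdiff n n m le_rfl hm _
  have hgh : BddMeas fun x => g x - h x := by
    refine ⟨hg.1.sub ?_, ?_⟩
    · exact measurable_of_tendsto_metrizable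
        (fun n => (hAbm _ (hFD n)).1.comp (measurable_id.prodMk measurable_const))
        (tendsto_pi_nhds.2 hh)
    · obtain ⟨C1, hC1⟩ := hg.2
      obtain ⟨C2, hC2⟩ := (hAbm _ (hFD 0)).2
      refine ⟨C1 + (C2 + C * (2 * (1 / (((0 : ℕ) : ℝ) + 1)))), fun x => ?_⟩
      have h1 := abs_le.1 (hC1 x)
      have h2 := abs_le.1 (hC2 (x, u))
      have h3 := abs_le.1 (hAh 0 x)
      exact abs_le.2 ⟨by linarith, by linarith⟩
  obtain ⟨f, hf, hfe⟩ := hran _ hgh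
  have hle : ∀ n x, |F n x - f x| ≤ 1 / ((n : ℝ) + 1) + C * (2 * (1 / ((n : ℝ) + 1))) := by
    intro n x
    have h1 := hsub _ (hFD n) _ hf
    have h2 := hdiss _ h1.1
    obtain ⟨K, hK⟩ := (hDbm _ h1.1).2
    have h3 := le_ciSup (f := fun x => |(F n + (-1 : ℝ) • f) x|)
      ⟨K, by rintro _ ⟨q, rfl⟩; exact hK q⟩ x
    have h4 : (⨆ x, |(F n + (-1 : ℝ) • f) x - A (F n + (-1 : ℝ) • f) (x, u)|)
        ≤ 1 / ((n : ℝ) + 1) + C * (2 * (1 / ((n : ℝ) + 1))) := by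
      refine ciSup_le fun y => ?_
      rw [h1.2]
      simp only [Pi.add_apply, Pi.smul_apply, smul_eq_mul]
      have e1 := abs_le.1 (hFg n y)
      have e2 := abs_le.1 (hAh n y)
      have e3 := hfe y
      exact abs_le.2 ⟨by linarith, by linarith⟩
    have h5 := h3.trans (h2.trans h4)
    simpa [sub_eq_add_neg] using h5
  have hgf : g = f := by
    ext x
    have t1 : Filter.Tendsto (fun n => F n x) Filter.atTop (nhds (g x)) := by
      rw [tendsto_iff_norm_sub_tendsto_zero]
      exact squeeze_zero (fun n => norm_nonneg _) (fun n => hFg n x) hlim0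
    have t2 : Filter.Tendsto (fun n => F n x) Filter.atTop (nhds (f x)) := by
      rw [tendsto_iff_norm_sub_tendsto_zero]
      exact squeeze_zero (fun n => norm_nonneg _) (fun n => hle n x)
        (by simpa using hlim0.add hlimC)
    exact tendsto_nhds_unique t1 t2
  rw [hgf]; exact hf

/-- **Theorem `thm:cpmsfm`.**  Under (A1)–(A5), given any solution `(X, U)`
of the relaxed controlled martingale problem for `(𝒜, ν)`, there exist a measurable
relaxed Markov control `v̄ : E × [0,∞) → P(𝕌)` and a solution `X'` of the relaxed
controlled martingale problem for `(𝒜, ν)` with the control `U' t = v̄ (X' t, t)`, such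
that `X' 0` has the same law as `X 0` and `X'` has the same one-dimensional marginals as
`X`; moreover `X'` can be taken to be a Markov process. -/
theorem stmt1 {E 𝕌 : Type*}
    [TopologicalSpace E] [PolishSpace E] [MeasurableSpace E] [BorelSpace E]
    [TopologicalSpace 𝕌] [PolishSpace 𝕌] [MeasurableSpace 𝕌] [BorelSpace 𝕌]
    (D : Set (E → ℝ)) (A : (E → ℝ) → E × 𝕌 → ℝ)
    (ν : Measure E) (hν : IsProbabilityMeasure ν)
    -- `𝒜` maps its domain (bounded measurable functions) to bounded measurable functions
    (hDbm : ∀ f ∈ D, BddMeas f) (hAbm : ∀ f ∈ D, BddMeas (A f))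
    -- `𝒜` is a linear operator
    (hadd : ∀ f ∈ D, ∀ g ∈ D, f + g ∈ D ∧ A (f + g) = A f + A g)
    (hsmul : ∀ (c : ℝ), ∀ f ∈ D, c • f ∈ D ∧ A (c • f) = c • A f)
    -- (A1): countable bp-dense subset of the graph of `𝒜`
    (hA1 : ∃ gk : ℕ → E → ℝ, (∀ k, gk k ∈ D) ∧ ∀ g ∈ D,
      pairFun g (A g) ∈ bpClosure {F | ∃ k, F = pairFun (gk k) (A (gk k))})
    -- (A2): `D(𝒜)` is an algebra separating points, containing constants; `𝒜 𝟏 = 0`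
    (hmul : ∀ f ∈ D, ∀ g ∈ D, f * g ∈ D)
    (hconst : ∀ c : ℝ, (fun _ : E => c) ∈ D)
    (hsep : ∀ x y : E, x ≠ y → ∃ f ∈ D, f x ≠ f y)
    (hone : A (fun _ => 1) = 0)
    -- (A3)(i): for every `u, x` the martingale problem for `(𝒜^u, δ_x)` has an
    -- r.c.l.l. solution
    (hA3i : ∀ (u : 𝕌) (x : E), ∃ (Ω' : Type) (m' : MeasurableSpace Ω') (P' : Measure Ω')
      (ℱ' : ℝ → MeasurableSpace Ω') (Y : ℝ → Ω' → E),
      IsMPSol D (fun f _ y => A f (y, u)) (Measure.dirac x) P' ℱ' Y ∧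
      ∀ ω, RCLLPath fun r => Y r ω)
    -- (A3)(ii): each `𝒜^u` is dissipative
    (hA3ii : ∀ (u : 𝕌) (lam : ℝ), 0 < lam → ∀ f ∈ D,
      lam * (⨆ x, |f x|) ≤ ⨆ x, |lam * f x - A f (x, u)|)
    -- (A3)(iii): `D(𝒜)` is dense in `B_b(E)` (in supremum norm)
    (hA3iii : ∀ g : E → ℝ, BddMeas g → ∀ ε : ℝ, 0 < ε → ∃ f ∈ D, ∀ x, |f x - g x| ≤ ε)
    -- (A3)(iv): `Range (I - 𝒜^u) = B_b(E)`
    (hA3iv : ∀ (u : 𝕌) (g : E → ℝ), BddMeas g → ∃ f ∈ D, ∀ x, f x - A f (x, u) = g x)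
    -- the given solution of the relaxed controlled martingale problem
    {Ω : Type*} [m0 : MeasurableSpace Ω] (P : Measure Ω)
    (ℱ : ℝ → MeasurableSpace Ω) (X : ℝ → Ω → E) (U : ℝ → Ω → Measure 𝕌)
    (hsol : IsRelaxedSol D A ν P ℱ X U)
    -- (A4) and (A5), for the measurable selection `v̄` attached to `(X, U)`
    (hA45 : ∃ vbar : E → ℝ → Measure 𝕌,
      Measurable (fun p : E × ℝ => vbar p.1 p.2) ∧
      (∀ x s, IsProbabilityMeasure (vbar x s)) ∧
      -- (A4): `E[𝒜̄ f (X s, U s) | X s] = 𝒜̄^{v̄(X s, s)} f (X s)` a.s.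
      (∀ f ∈ D, ∀ s : ℝ, 0 ≤ s →
        (P[fun ω => Abar A f (X s ω) (U s ω)|MeasurableSpace.comap (X s) inferInstance])
          =ᵐ[P] fun ω => Abar A f (X s ω) (vbar (X s ω) s)) ∧
      -- (A4): the martingale problem for `(𝒜̄^{v̄(⋅,⋅)}, ν')`, w.r.t. the natural
      -- filtration of the solution, has a solution for every initial law `ν'`
      (∀ ν' : Measure E, IsProbabilityMeasure ν' →
        ∃ (Ω' : Type) (m' : MeasurableSpace Ω') (P' : Measure Ω') (Y : ℝ → Ω' → E),
          IsMPSol D (fun f s y => Abar A f y (vbar y s)) ν' P'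
            (fun t => ⨆ r ∈ Icc (0:ℝ) t, MeasurableSpace.comap (Y r) inferInstance) Y) ∧
      -- (A5): the martingale problem for `(𝒜̄^{v̄(⋅,⋅)}, δ_x)` has a Markov solution
      (∀ x : E, ∃ (Ω' : Type) (m' : MeasurableSpace Ω') (P' : Measure Ω')
        (ℱ' : ℝ → MeasurableSpace Ω') (Y : ℝ → Ω' → E),
        IsMPSol D (fun f s y => Abar A f y (vbar y s)) (Measure.dirac x) P' ℱ' Y ∧
        IsMarkovProc P' ℱ' Y)) :
    -- conclusion: a Markov control and a Markov mimic with the same marginals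
    ∃ vbar : E → ℝ → Measure 𝕌,
      Measurable (fun p : E × ℝ => vbar p.1 p.2) ∧
      (∀ x s, IsProbabilityMeasure (vbar x s)) ∧
      ∃ (Ω' : Type) (m' : MeasurableSpace Ω') (P' : Measure Ω')
        (ℱ' : ℝ → MeasurableSpace Ω') (X' : ℝ → Ω' → E),
        IsRelaxedSol D A ν P' ℱ' X' (fun t ω => vbar (X' t ω) t) ∧
        P'.map (X' 0) = P.map (X 0) ∧
        (∀ t : ℝ, 0 ≤ t → P'.map (X' t) = P.map (X t)) ∧
        IsMarkovProc P' ℱ' X' := by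
  obtain ⟨vbar, hv, hvp, hcond, hex, -⟩ := hA45
  have hPp := hsol.prob
  have hΩ : Nonempty Ω := by
    by_contra hne
    rw [not_nonempty_iff] at hne
    have := measure_univ (μ := P)
    rw [Set.univ_eq_empty_iff.2 hne, measure_empty] at this
    exact zero_ne_one this
  obtain ⟨ω0⟩ := hΩ
  have hE : Nonempty E := ⟨X 0 ω0⟩
  have hU : Nonempty 𝕌 := by
    by_contra hne
    rw [not_nonempty_iff] at hne
    have h1 := hsol.probU 0 ω0
    have := measure_univ (μ := U 0 ω0)
    rw [Set.univ_eq_empty_iff.2 hne, measure_empty] at this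
    exact zero_ne_one this
  obtain ⟨u0⟩ := hU
  -- the uniform operator bound
  have hlaws : ∀ p : E × 𝕌, ∃ μ : ℝ → Measure E, (∀ t, 0 ≤ t → IsProbabilityMeasure (μ t)) ∧
      ∀ f ∈ D, ∀ t, 0 ≤ t → IntegrableOn (fun s => ∫ y, A f (y, p.2) ∂(μ s)) (Ioc 0 t) ∧
        ∫ y, f y ∂(μ t) - f p.1 = ∫ s in Ioc 0 t, ∫ y, A f (y, p.2) ∂(μ s) := by
    rintro ⟨x, u⟩
    obtain ⟨Ω', m', P', ℱ', Y, hY, -⟩ := hA3i u x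
    exact aux_laws D A hDbm hAbm u x P' ℱ' Y hY
  choose μ hμp hμd using hlaws
  obtain ⟨C, hC, hCb⟩ := aux_bound D A hDbm hAbm hA3iii μ hμp
    (fun f hf p t ht => hμd p f hf t ht)
  have hfull : ∀ g : E → ℝ, BddMeas g → g ∈ D := fun g hg =>
    aux_full D A hDbm hAbm hadd hsmul hA3iii u0
      (fun f hf => by simpa using hA3ii u0 1 one_pos f hf) (hA3iv u0) C hCb g hg
  -- the Markovian generator
  have hLjoint : ∀ f, BddMeas f → Measurable fun q : E × ℝ => Abar A f q.1 (vbar q.1 q.2) :=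
    fun f hf => aux_kernel (hAbm f (hfull f hf)).1 measurable_fst hv (fun q => hvp _ _)
  have hLb : ∀ (a : ℝ) f M, BddMeas f → (∀ x, |f x| ≤ M) →
      ∀ x, |Abar A f x (vbar x a)| ≤ C * M := by
    intro a f M hf hM x
    have := hvp x a
    exact aux_intbound _ fun u => hCb f (hfull f hf) M hM _
  have hLm : ∀ (a : ℝ) f, BddMeas f → BddMeas fun x => Abar A f x (vbar x a) := by
    intro a f hf
    refine ⟨(hLjoint f hf).comp (measurable_id.prodMk measurable_const), ?_⟩
    obtain ⟨M, hM⟩ := hf.2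
    exact ⟨C * M, hLb a f M hf hM⟩
  obtain ⟨Ω', m', P', Y, hY⟩ := hex ν hν
  set 𝒢 : ℝ → MeasurableSpace Ω' :=
    fun t => ⨆ r ∈ Icc (0:ℝ) t, MeasurableSpace.comap (Y r) inferInstance with h𝒢
  have hP'p := hY.prob
  have hYm : ∀ t, 0 ≤ t → Measurable (Y t) := fun t ht =>
    (aux_adapted hY.progX t ht).mono (hY.le t) le_rfl
  have hXm : ∀ t, 0 ≤ t → Measurable (X t) := fun t ht =>
    (aux_adapted hsol.progX t ht).mono (hsol.le t) le_rfl
  have hYd : ∀ f, BddMeas f → ∀ s t, 0 ≤ s → s ≤ t → ∀ Z : Ω' → ℝ, Measurable[𝒢 s] Z →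
      ∀ KZ, (∀ ω, |Z ω| ≤ KZ) →
      IntegrableOn (fun a => ∫ ω, Z ω * Abar A f (Y a ω) (vbar (Y a ω) a) ∂P') (Ioc s t) ∧
      ∫ ω, Z ω * f (Y t ω) ∂P' - ∫ ω, Z ω * f (Y s ω) ∂P'
        = ∫ a in Ioc s t, ∫ ω, Z ω * Abar A f (Y a ω) (vbar (Y a ω) a) ∂P' := by
    intro f hf s t hs hst Z hZ KZ hZb
    obtain ⟨M, hM⟩ := hf.2
    refine aux_dynkin P' 𝒢 hY.le Y hY.progX (fun a ω => Abar A f (Y a ω) (vbar (Y a ω) a)) ?_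
      (C * M) (fun a ω => hLb a f M hf hM _) f hf (hY.mart f (hfull f hf)) s t hs hst Z hZ KZ hZb
    intro t ht
    let _ : MeasurableSpace Ω' := 𝒢 t
    have h1 : Measurable (fun p : Icc (0:ℝ) t × Ω' => Y p.1 p.2) := hY.progX t ht
    have h2 : Measurable (fun p : Icc (0:ℝ) t × Ω' => (Y p.1 p.2, (p.1 : ℝ))) :=
      h1.prodMk (measurable_subtype_coe.comp measurable_fst)
    exact (hLjoint f hf).comp h2
  have hXd : ∀ f, BddMeas f → ∀ t, 0 ≤ t →
      IntegrableOn (fun a => ∫ ω, Abar A f (X a ω) (vbar (X a ω) a) ∂P) (Ioc 0 t) ∧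
      ∫ ω, f (X t ω) ∂P - ∫ ω, f (X 0 ω) ∂P
        = ∫ a in Ioc 0 t, ∫ ω, Abar A f (X a ω) (vbar (X a ω) a) ∂P := by
    intro f hf t ht
    have hfD := hfull f hf
    obtain ⟨K, hK⟩ := (hAbm f hfD).2
    have hG : ProgMeas ℱ (fun a ω => Abar A f (X a ω) (U a ω)) := by
      intro t ht
      let _ : MeasurableSpace Ω := ℱ t
      have h1 : Measurable (fun p : Icc (0:ℝ) t × Ω => X p.1 p.2) := hsol.progX t ht
      have h2 : Measurable (fun p : Icc (0:ℝ) t × Ω => U p.1 p.2) := hsol.progU t ht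
      exact aux_kernel (hAbm f hfD).1 h1 h2 (fun q => hsol.probU _ _)
    have hd := aux_dynkin P ℱ hsol.le X hsol.progX (fun a ω => Abar A f (X a ω) (U a ω)) hG K
      (fun a ω => by
        have := hsol.probU a ω
        exact aux_intbound _ fun u => hK _) f hf (hsol.mart f hfD) 0 t le_rfl ht (fun _ => 1)
      measurable_const 1 (fun _ => by simp)
    simp only [one_mul] at hd
    have hce : ∀ a, 0 ≤ a → ∫ ω, Abar A f (X a ω) (U a ω) ∂P
        = ∫ ω, Abar A f (X a ω) (vbar (X a ω) a) ∂P := by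
      intro a ha
      rw [← integral_condExp (μ := P) (hXm a ha).comap_le]
      exact integral_congr_ae (hcond f hfD a ha)
    have hcongr : EqOn (fun a => ∫ ω, Abar A f (X a ω) (U a ω) ∂P)
      (fun a => ∫ ω, Abar A f (X a ω) (vbar (X a ω) a) ∂P) (Ioc 0 t) := fun a ha => hce a ha.1.le
    refine ⟨hd.1.congr_fun hcongr measurableSet_Ioc, ?_⟩
    rw [hd.2]
    exact setIntegral_congr_fun measurableSet_Ioc hcongr
  -- equality of marginals
  have hinit : ∀ f : E → ℝ, BddMeas f → ∫ ω, f (Y 0 ω) ∂P' = ∫ ω, f (X 0 ω) ∂P := by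
    intro f hf
    rw [← integral_map (hYm 0 le_rfl).aemeasurable hf.1.aestronglyMeasurable,
      ← integral_map (hXm 0 le_rfl).aemeasurable hf.1.aestronglyMeasurable, hY.init, hsol.init]
  have hmarg : ∀ t, 0 ≤ t → ∀ f : E → ℝ, BddMeas f →
      ∫ ω, f (Y t ω) ∂P' = ∫ ω, f (X t ω) ∂P := by
    intro t ht f hf
    refine sub_eq_zero.1 (aux_gronwall (fun a f x => Abar A f x (vbar x a)) C 2 0 hLm hLb
      (fun r f => ∫ ω, f (Y r ω) ∂P' - ∫ ω, f (X r ω) ∂P) ?_ ?_ t ht f hf)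
    · intro r f M hr hf hM
      have h1 := abs_le.1 (aux_intbound P' (g := fun ω => f (Y r ω)) fun ω => hM _)
      have h2 := abs_le.1 (aux_intbound P (g := fun ω => f (X r ω)) fun ω => hM _)
      exact abs_le.2 ⟨by linarith, by linarith⟩
    · intro r f hr hf
      have h1 := hYd f hf 0 r le_rfl hr (fun _ => 1) measurable_const 1 (fun _ => by simp)
      simp only [one_mul] at h1
      have h2 := hXd f hf r hr
      simp only
      rw [integral_sub h1.1 h2.1, ← h1.2, ← h2.2, hinit f hf]
      ring
  have hmap : ∀ t : ℝ, 0 ≤ t → P'.map (Y t) = P.map (X t) := by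
    intro t ht
    ext B hB
    have hind : BddMeas (B.indicator fun _ => (1 : ℝ)) := by
      refine ⟨measurable_const.indicator hB, 1, fun x => ?_⟩
      by_cases hx : x ∈ B <;> simp [hx]
    have h1 := hmarg t ht _ hind
    rw [← integral_map (hYm t ht).aemeasurable hind.1.aestronglyMeasurable,
      ← integral_map (hXm t ht).aemeasurable hind.1.aestronglyMeasurable,
      integral_indicator_const _ hB, integral_indicator_const _ hB] at h1
    have := Measure.isProbabilityMeasure_map (μ := P') (hYm t ht).aemeasurable
    have := Measure.isProbabilityMeasure_map (μ := P) (hXm t ht).aemeasurable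
    simp only [smul_eq_mul, mul_one] at h1
    exact (measureReal_eq_measureReal_iff).1 h1
  refine ⟨vbar, hv, hvp, Ω', m', P', 𝒢, Y, ?_, hmap 0 le_rfl, hmap, ?_⟩
  · refine ⟨hY.prob, hY.le, hY.mono, hY.progX, ?_, fun t ω => hvp _ _, hY.init, hY.mart⟩
    intro t ht
    let _ : MeasurableSpace Ω' := 𝒢 t
    have h1 : Measurable (fun p : Icc (0:ℝ) t × Ω' => Y p.1 p.2) := hY.progX t ht
    have h2 : Measurable (fun p : Icc (0:ℝ) t × Ω' => (Y p.1 p.2, (p.1 : ℝ))) :=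
      h1.prodMk (measurable_subtype_coe.comp measurable_fst)
    exact hv.comp h2
  -- Markov property
  intro s t hs hst g hg
  obtain ⟨Mg, hMg⟩ := hg.2
  have ht := hs.trans hst
  set σ : MeasurableSpace Ω' := MeasurableSpace.comap (Y s) inferInstance with hσ
  have hσ𝒢 : σ ≤ 𝒢 s := (aux_adapted hY.progX s hs).comap_le
  have hσm : σ ≤ m' := hσ𝒢.trans (hY.le s)
  have hgi : Integrable (fun ω => g (Y t ω)) P' :=
    aux_integrable P' (hg.1.comp (hYm t ht)) fun ω => hMg _
  symm
  refine ae_eq_condExp_of_forall_setIntegral_eq (hY.le s) hgi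
    (fun B _ _ => integrable_condExp.integrableOn) ?_
    (stronglyMeasurable_condExp.mono hσ𝒢).aestronglyMeasurable
  intro B hB _
  have hBm : MeasurableSet[m'] B := hY.le s B hB
  set b : Ω' → ℝ := B.indicator fun _ => 1 with hb
  have hb0 : ∀ ω, 0 ≤ b ω := fun ω => indicator_nonneg (fun _ _ => zero_le_one) ω
  have hb1 : ∀ ω, b ω ≤ 1 := fun ω => by
    by_cases hx : ω ∈ B <;> simp [hb, hx]
  have hbabs : ∀ ω, |b ω| ≤ 1 := fun ω => abs_le.2 ⟨by linarith [hb0 ω], hb1 ω⟩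
  have hbG : Measurable[𝒢 s] b := by
    let _ : MeasurableSpace Ω' := 𝒢 s
    exact measurable_const.indicator hB
  have hbm : Measurable[m'] b := hbG.mono (hY.le s) le_rfl
  have hbi : Integrable b P' := aux_integrable P' hbm hbabs
  -- a bounded version of the conditional expectation of `b` given `σ`
  set V : Ω' → ℝ := fun ω => max 0 (min 1 ((P'[b|σ]) ω)) with hV
  have hVσ : Measurable[σ] V := by
    have h1 : Measurable[σ] (P'[b|σ]) := stronglyMeasurable_condExp.measurable
    exact measurable_const.max (measurable_const.min h1)
  have hV0 : ∀ ω, 0 ≤ V ω := fun ω => le_max_left _ _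
  have hV1 : ∀ ω, V ω ≤ 1 := fun ω => max_le zero_le_one (min_le_left _ _)
  have hVabs : ∀ ω, |V ω| ≤ 1 := fun ω => abs_le.2 ⟨by linarith [hV0 ω], hV1 ω⟩
  have hVm : Measurable[m'] V := hVσ.mono hσm le_rfl
  have hVae : P'[b|σ] =ᵐ[P'] V := by
    have h1 : 0 ≤ᵐ[P'] P'[b|σ] := condExp_nonneg (Filter.Eventually.of_forall hb0)
    have h2 : P'[b|σ] ≤ᵐ[P'] P'[fun _ => (1 : ℝ)|σ] :=
      condExp_mono hbi (integrable_const _) (Filter.Eventually.of_forall hb1)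
    rw [condExp_const hσm] at h2
    filter_upwards [h1, h2] with ω e1 e2
    simp only [hV]
    rw [min_eq_right e2]
    exact (max_eq_right e1).symm
  -- pulling out
  have hpull : ∀ W : Ω' → ℝ, StronglyMeasurable[σ] W → Integrable W P' →
      ∫ ω, b ω * W ω ∂P' = ∫ ω, V ω * W ω ∂P' := by
    intro W hW hWi
    have hbW : Integrable (b * W) P' :=
      hWi.bdd_mul hbm.aestronglyMeasurable (Filter.Eventually.of_forall hbabs)
    have h1 := condExp_mul_of_stronglyMeasurable_right (m := σ) (μ := P') hW hbW hbi
    have h2 : ∫ ω, (P'[b * W|σ]) ω ∂P' = ∫ ω, (b * W) ω ∂P' := integral_condExp hσm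
    rw [show ∫ ω, b ω * W ω ∂P' = ∫ ω, (b * W) ω ∂P' from rfl, ← h2]
    apply integral_congr_ae
    filter_upwards [h1, hVae] with ω e1 e2
    rw [e1, Pi.mul_apply, e2]
  have hpull2 : ∫ ω, V ω * (P'[fun ω => g (Y t ω)|σ]) ω ∂P' = ∫ ω, V ω * g (Y t ω) ∂P' := by
    have h1 := condExp_stronglyMeasurable_mul_of_bound (μ := P') hσm hVσ.stronglyMeasurable hgi 1
      (Filter.Eventually.of_forall hVabs)
    have h2 : ∫ ω, (P'[V * (fun ω => g (Y t ω))|σ]) ω ∂P' = ∫ ω, V ω * g (Y t ω) ∂P' :=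
      integral_condExp hσm
    rw [← h2]
    exact (integral_congr_ae h1).symm
  have hZG : Measurable[𝒢 s] fun ω => b ω - V ω := hbG.sub (hVσ.mono hσ𝒢 le_rfl)
  have hZb : ∀ ω, |b ω - V ω| ≤ 1 := fun ω =>
    abs_le.2 ⟨by linarith [hb0 ω, hV1 ω], by linarith [hb1 ω, hV0 ω]⟩
  have hZ0 : ∀ f : E → ℝ, BddMeas f → ∀ r, 0 ≤ r →
      ∫ ω, (b ω - V ω) * f (Y r ω) ∂P'
        = ∫ ω, b ω * f (Y r ω) ∂P' - ∫ ω, V ω * f (Y r ω) ∂P' := by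
    intro f hf r hr
    obtain ⟨M, hM⟩ := hf.2
    have hfi : Integrable (fun ω => f (Y r ω)) P' :=
      aux_integrable P' (hf.1.comp (hYm r hr)) fun ω => hM _
    rw [← integral_sub]
    · simp only [sub_mul]
    · exact hfi.bdd_mul hbm.aestronglyMeasurable (Filter.Eventually.of_forall hbabs)
    · exact hfi.bdd_mul hVm.aestronglyMeasurable (Filter.Eventually.of_forall hVabs)
  have hzero : ∫ ω, (b ω - V ω) * g (Y t ω) ∂P' = 0 := by
    refine aux_gronwall (fun a f x => Abar A f x (vbar x a)) C 1 s hLm hLb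
      (fun r f => ∫ ω, (b ω - V ω) * f (Y r ω) ∂P') ?_ ?_ t hst g hg
    · intro r f M hr hf hM
      refine aux_intbound P' fun ω => ?_
      rw [abs_mul]
      exact mul_le_mul (hZb ω) (hM _) (abs_nonneg _) zero_le_one
    · intro r f hr hf
      have h1 := (hYd f hf s r hs hr _ hZG 1 hZb).2
      have h2 : ∫ ω, (b ω - V ω) * f (Y s ω) ∂P' = 0 := by
        obtain ⟨M, hM⟩ := hf.2
        rw [hZ0 f hf s hs, sub_eq_zero]
        refine hpull (fun ω => f (Y s ω)) ?_
          (aux_integrable P' (hf.1.comp (hYm s hs)) fun ω => hM _)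
        exact (hf.1.comp (comap_measurable (Y s))).stronglyMeasurable
      rw [h2, sub_zero] at h1
      exact h1
  rw [hZ0 g hg t ht, sub_eq_zero] at hzero
  have hset : ∀ W : Ω' → ℝ, ∫ ω in B, W ω ∂P' = ∫ ω, b ω * W ω ∂P' := by
    intro W
    rw [← integral_indicator hBm]
    congr 1
    ext ω
    by_cases hx : ω ∈ B <;> simp [hb, hx]
  rw [hset, hset, hpull _ stronglyMeasurable_condExp integrable_condExp, hpull2, hzero]
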